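/- Existence of bounded solutions: Let (γ_n) be a sequence of ratios of odd positive integers with γ⁺ = sup γ_n ≤ 1, α ≥ 1, k a positive integer, f : ℝ → ℝ locally Lipschitz, r : ℕ → ℝ∖{0}, a, q : ℕ → ℝ with ∑_{n}[ |1/r_n| ∑_{i≥n} |a_i| ]^{1/γ⁺} < ∞, ∑_{n}[ |1/r_n| ∑_{i≥n} |q_i| ]^{1/γ⁺} < ∞, ∑|a_i| < ∞, ∑|q_i| < ∞, and p : ℕ → ℝ∖{0} with −1 < liminf p_n ≤ limsup p_n < 1. Then there exists a bounded sequence x : {k, k+1, ...} → ℝ satisfying Δ( r_n (Δ(x_n + p_n x_{n−k}))^{γ_n} ) + q_n x_n^α + a_n f(x_{n+1}) = 0 for all sufficiently large n. -/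

import Mathlib

/-- Sign-preserving real power (odd-power extension to all reals). -/
noncomputable def oddPow (t e : ℝ) : ℝ := Real.sign t * |t| ^ e

/-- `x` is a ratio of odd positive integers. -/
def IsOddRatio (x : ℝ) : Prop :=
  ∃ a b : ℕ, Odd a ∧ Odd b ∧ 0 < a ∧ 0 < b ∧ x = (a : ℝ) / (b : ℝ)

/-!
Look for `x` with `zₙ = xₙ + pₙ xₙ₋ₖ → 0`. Writing `Gₙ = qₙ g(xₙ) + aₙ f(xₙ₊₁)` and summing the
equation twice from infinity turns it into the fixed point problem
`xₙ = -pₙ xₙ₋ₖ - ∑_{m ≥ n} (rₘ⁻¹ ∑_{i ≥ m} Gᵢ)^{1/γₘ}`. On the unit ball of bounded sequences,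
every operation entering the right-hand side controls both the size and the Lipschitz constant
by one and the same sequence. The exponents `1/γₘ` are unbounded, but
`s wˢ ≤ (2w)ˢ ≤ (2w)^{1/γ⁺}` for `s = 1/γₘ ≥ 1/γ⁺` and `2w ≤ 1`, which is summable by hypothesis.
Far enough out the double sum is therefore smaller than the gap `1 - limsup |pₙ|`, and the
right-hand side is a contraction of the ball.
-/

open Filter Topology
open scoped BoundedContinuousFunction

theorem IsOddRatio.pos {x : ℝ} (hx : IsOddRatio x) : 0 < x := by
  obtain ⟨a, b, -, -, ha, hb, rfl⟩ := hx
  positivity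

section OddPow

variable {s t u v M : ℝ}

theorem oddPow_of_nonneg (hs : s ≠ 0) (ht : 0 ≤ t) : oddPow t s = t ^ s := by
  rcases ht.eq_or_lt with rfl | ht
  · simp [oddPow, Real.zero_rpow hs]
  · rw [oddPow, Real.sign_of_pos ht, abs_of_pos ht, one_mul]

theorem oddPow_neg (t s : ℝ) : oddPow (-t) s = -oddPow t s := by
  rw [oddPow, oddPow, Real.sign_neg, abs_neg, neg_mul]

theorem abs_oddPow (hs : s ≠ 0) (t : ℝ) : |oddPow t s| = |t| ^ s := by
  wlog ht : 0 ≤ t generalizing t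
  · simpa only [oddPow_neg, abs_neg] using this (-t) (by linarith)
  · rw [oddPow_of_nonneg hs ht, abs_of_nonneg (by positivity), abs_of_nonneg ht]

theorem oddPow_oddPow_inv (hs : 0 < s) (t : ℝ) : oddPow (oddPow t s⁻¹) s = t := by
  have of_nonneg {u : ℝ} (hu : 0 ≤ u) : oddPow (oddPow u s⁻¹) s = u := by
    rw [oddPow_of_nonneg (inv_ne_zero hs.ne') hu, oddPow_of_nonneg hs.ne' (by positivity),
      Real.rpow_inv_rpow hu hs.ne']
  rcases le_total 0 t with ht | ht
  · exact of_nonneg ht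
  · simpa only [oddPow_neg, neg_inj] using of_nonneg (neg_nonneg.2 ht)

theorem rpow_sub_rpow_le (hs : 1 ≤ s) (hv : 0 ≤ v) (hvu : v ≤ u) :
    u ^ s - v ^ s ≤ s * u ^ (s - 1) * (u - v) := by
  rcases hvu.eq_or_lt with rfl | hvu
  · simp
  · have slope_le := (convexOn_rpow hs).slope_le_of_hasDerivAt hv (hv.trans hvu.le) hvu
      (Real.hasDerivAt_rpow_const (Or.inr hs))
    rwa [slope_def_field, div_le_iff₀ (sub_pos.2 hvu)] at slope_le

theorem abs_oddPow_sub_oddPow_le_of_nonneg (hs : 1 ≤ s) (hv : 0 ≤ v) (hvu : v ≤ u) (hu : u ≤ M) :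
    |oddPow u s - oddPow v s| ≤ s * M ^ (s - 1) * (u - v) := by
  have hs_ne : s ≠ 0 := by positivity
  have hu_nonneg : 0 ≤ u := hv.trans hvu
  have : 0 ≤ u - v := sub_nonneg.2 hvu
  have rpow_le : v ^ s ≤ u ^ s := by gcongr
  calc |oddPow u s - oddPow v s| = u ^ s - v ^ s := by
        rw [oddPow_of_nonneg hs_ne hu_nonneg, oddPow_of_nonneg hs_ne hv,
          abs_of_nonneg (sub_nonneg.2 rpow_le)]
    _ ≤ s * u ^ (s - 1) * (u - v) := rpow_sub_rpow_le hs hv hvu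
    _ ≤ s * M ^ (s - 1) * (u - v) := by gcongr

theorem abs_oddPow_sub_oddPow_le (hs : 1 ≤ s) (hu : |u| ≤ M) (hv : |v| ≤ M) :
    |oddPow u s - oddPow v s| ≤ s * M ^ (s - 1) * |u - v| := by
  wlog hvu : v ≤ u generalizing u v
  · rw [abs_sub_comm, abs_sub_comm u]
    exact this hv hu (le_of_not_ge hvu)
  rw [abs_of_nonneg (sub_nonneg.2 hvu)]
  have hu_le : u ≤ M := (le_abs_self u).trans hu
  have hv_le : -v ≤ M := (neg_le_abs v).trans hv
  rcases le_total 0 v with hv0 | hv0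
  · exact abs_oddPow_sub_oddPow_le_of_nonneg hs hv0 hvu hu_le
  rcases le_total u 0 with hu0 | hu0
  · have reflected := abs_oddPow_sub_oddPow_le_of_nonneg hs (neg_nonneg.2 hu0)
      (neg_le_neg hvu) hv_le
    rwa [oddPow_neg, oddPow_neg, neg_sub_neg, neg_sub_neg] at reflected
  · have oddPow_zero : oddPow 0 s = 0 := by simp [oddPow]
    have right := abs_oddPow_sub_oddPow_le_of_nonneg hs le_rfl hu0 hu_le
    have left := abs_oddPow_sub_oddPow_le_of_nonneg hs le_rfl (neg_nonneg.2 hv0) hv_le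
    rw [oddPow_zero, sub_zero] at left right
    rw [oddPow_neg, abs_neg] at left
    linarith [abs_sub (oddPow u s) (oddPow v s)]

theorem locallyLipschitz_oddPow (hs : 1 ≤ s) : LocallyLipschitz (oddPow · s) := by
  intro t
  have hK : 0 ≤ s * (|t| + 1) ^ (s - 1) := by positivity
  refine ⟨⟨_, hK⟩, {u | |u| ≤ |t| + 1}, ?_, .of_dist_le_mul fun u hu v hv => ?_⟩
  · exact (continuous_abs.tendsto t).eventually_le_const (lt_add_one _)
  · exact abs_oddPow_sub_oddPow_le hs hu hv

end OddPow

theorem mul_rpow_le_two_mul_rpow {s s₀ w : ℝ} (hs₀ : 1 ≤ s₀) (hs : s₀ ≤ s) (hw : 0 ≤ w)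
    (hw_half : 2 * w ≤ 1) : s * w ^ s ≤ (2 * w) ^ s₀ := by
  have le_two_rpow : s ≤ 2 ^ s := by
    have bernoulli := one_add_mul_self_le_rpow_one_add (s := 1) (by norm_num) (hs₀.trans hs)
    norm_num at bernoulli
    linarith
  calc s * w ^ s ≤ 2 ^ s * w ^ s := by gcongr
    _ = (2 * w) ^ s := (Real.mul_rpow zero_le_two hw).symm
    _ ≤ (2 * w) ^ s₀ :=
      Real.rpow_le_rpow_of_exponent_ge' (by positivity) hw_half (by linarith) hs

theorem summable_rpow_mul_add_mul {ι : Type*} {u v : ι → ℝ} {s A B : ℝ} (hs : 1 ≤ s)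
    (hA : 0 ≤ A) (hB : 0 ≤ B) (hu : ∀ n, 0 ≤ u n) (hv : ∀ n, 0 ≤ v n)
    (hus : Summable fun n => u n ^ s) (hvs : Summable fun n => v n ^ s) :
    Summable fun n => (A * u n + B * v n) ^ s := by
  refine Real.summable_Lp_add_of_nonneg hs (fun n => mul_nonneg hA (hu n))
    (fun n => mul_nonneg hB (hv n)) ?_ ?_
  · simpa only [Real.mul_rpow hA (hu _)] using hus.mul_left (A ^ s)
  · simpa only [Real.mul_rpow hB (hv _)] using hvs.mul_left (B ^ s)

theorem eventually_le_one_of_tendsto_rpow_zero {ι : Type*} {l : Filter ι} {u : ι → ℝ} {s : ℝ}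
    (hs : 0 ≤ s) (h : Tendsto (fun i => u i ^ s) l (𝓝 0)) : ∀ᶠ i in l, u i ≤ 1 := by
  filter_upwards [h.eventually_lt_const one_pos] with i hi
  exact le_of_not_gt fun hu => hi.not_ge (Real.one_le_rpow hu.le hs)

theorem exists_lt_eventually_abs_le {ι : Type*} {l : Filter ι} {p : ι → ℝ} {M : ℝ}
    (hliminf : -(M : EReal) < liminf (fun i => (p i : EReal)) l)
    (hlimsup : limsup (fun i => (p i : EReal)) l < M) :
    ∃ c < M, ∀ᶠ i in l, |p i| ≤ c := by
  obtain ⟨L, hML, hL⟩ := EReal.lt_iff_exists_real_btwn.1 hliminf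
  obtain ⟨U, hU, hUM⟩ := EReal.lt_iff_exists_real_btwn.1 hlimsup
  have neg_L_lt : -L < M := neg_lt.1 (by exact_mod_cast hML)
  refine ⟨max (-L) U, max_lt neg_L_lt (by exact_mod_cast hUM), ?_⟩
  filter_upwards [eventually_lt_of_lt_liminf hL, eventually_lt_of_limsup_lt hU] with i hLi hiU
  have L_lt : L < p i := by exact_mod_cast hLi
  have lt_U : p i < U := by exact_mod_cast hiU
  exact abs_le'.2 ⟨lt_U.le.trans (le_max_right _ _), (neg_le_neg L_lt.le).trans (le_max_left _ _)⟩

section TailSum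

/-- The tail `∑_{i ≥ n} cᵢ` of the series `∑ c`. -/
noncomputable def tailSum (c : ℕ → ℝ) (n : ℕ) : ℝ := ∑' i, c (n + i)

variable {b c d : ℕ → ℝ} {n : ℕ}

theorem summable_tail (hc : Summable c) (n : ℕ) : Summable fun i => c (n + i) :=
  hc.comp_injective (add_right_injective n)

theorem summable_tail_of_abs_le (hb : Summable b) (h : ∀ i, n ≤ i → |c i| ≤ b i) :
    Summable fun i => c (n + i) :=
  .of_norm_bounded (summable_tail hb n) fun _ => h _ (Nat.le_add_right _ _)

theorem abs_tailSum_le (hb : Summable b) (h : ∀ i, n ≤ i → |c i| ≤ b i) :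
    |tailSum c n| ≤ tailSum b n := by
  rw [← Real.norm_eq_abs]
  exact tsum_of_norm_bounded (summable_tail hb n).hasSum fun _ => h _ (Nat.le_add_right _ _)

theorem tailSum_eq_add_tailSum_succ (hc : Summable fun i => c (n + i)) :
    tailSum c n = c n + tailSum c (n + 1) := by
  rw [tailSum, hc.tsum_eq_zero_add, tailSum]
  simp only [add_zero, add_assoc, add_comm 1]

theorem tailSum_mul_add_mul (hc : Summable c) (hd : Summable d) (A B : ℝ) (n : ℕ) :
    tailSum (fun i => c i * A + d i * B) n = tailSum c n * A + tailSum d n * B := by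
  simp only [tailSum]
  rw [((summable_tail hc n).mul_right A).tsum_add ((summable_tail hd n).mul_right B),
    tsum_mul_right, tsum_mul_right]

theorem tendsto_tailSum_atTop_zero (c : ℕ → ℝ) : Tendsto (tailSum c) atTop (𝓝 0) := by
  simpa only [add_comm] using! tendsto_sum_nat_add c

end TailSum

/-- `DominatedFrom N F b` says that on the unit ball of bounded sequences the operator `F` is, at
each index `n ≥ N`, both bounded by `b n` and `b n`-Lipschitz for the supremum distance. Using the
same `b` for both purposes makes the notion stable under the operations below. -/
structure DominatedFrom (N : ℕ) (F : (ℕ → ℝ) → ℕ → ℝ) (b : ℕ → ℝ) : Prop where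
  abs_apply_le : ∀ ⦃x : ℕ → ℝ⦄, (∀ n, |x n| ≤ 1) → ∀ ⦃n⦄, N ≤ n → |F x n| ≤ b n
  abs_sub_apply_le : ∀ ⦃x y : ℕ → ℝ⦄ ⦃D : ℝ⦄, (∀ n, |x n| ≤ 1) → (∀ n, |y n| ≤ 1) →
    (∀ n, |x n - y n| ≤ D) → ∀ ⦃n⦄, N ≤ n → |F x n - F y n| ≤ D * b n

namespace DominatedFrom

variable {N N' : ℕ} {F F' : (ℕ → ℝ) → ℕ → ℝ} {b b' : ℕ → ℝ}

theorem nonneg (hF : DominatedFrom N F b) {n : ℕ} (hn : N ≤ n) : 0 ≤ b n :=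
  (abs_nonneg _).trans (hF.abs_apply_le (x := 0) (by simp) hn)

theorem mono_index (hF : DominatedFrom N F b) (hN : N ≤ N') : DominatedFrom N' F b where
  abs_apply_le _ hx _ hn := hF.abs_apply_le hx (hN.trans hn)
  abs_sub_apply_le _ _ _ hx hy hD _ hn := hF.abs_sub_apply_le hx hy hD (hN.trans hn)

theorem mono (hF : DominatedFrom N F b) (hb : ∀ n, N ≤ n → b n ≤ b' n) :
    DominatedFrom N F b' where
  abs_apply_le _ hx n hn := (hF.abs_apply_le hx hn).trans (hb n hn)
  abs_sub_apply_le _ _ _ hx hy hD n hn := (hF.abs_sub_apply_le hx hy hD hn).trans <|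
    mul_le_mul_of_nonneg_left (hb n hn) ((abs_nonneg _).trans (hD 0))

theorem eval (N : ℕ) (σ : ℕ → ℕ) : DominatedFrom N (fun x n => x (σ n)) fun _ => 1 where
  abs_apply_le _ hx _ _ := hx _
  abs_sub_apply_le _ _ _ _ _ hD _ _ := (hD _).trans_eq (mul_one _).symm

theorem exists_comp_eval {h : ℝ → ℝ} (hh : LocallyLipschitz h) (N : ℕ) (σ : ℕ → ℕ) :
    ∃ C, DominatedFrom N (fun x n => h (x (σ n))) fun _ => C := by
  obtain ⟨K, hK⟩ := hh.locallyLipschitzOn.exists_lipschitzOnWith_of_compact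
    (isCompact_Icc (a := (-1 : ℝ)) (b := 1))
  have hK_nonneg : (0 : ℝ) ≤ K := K.2
  have h_lip {u v : ℝ} (hu : |u| ≤ 1) (hv : |v| ≤ 1) : |h u - h v| ≤ K * |u - v| :=
    hK.dist_le_mul u (abs_le.1 hu) v (abs_le.1 hv)
  refine ⟨K + |h 0|, fun x hx n _ => ?_, fun x y D hx hy hD n _ => ?_⟩
  · calc |h (x (σ n))| ≤ |h (x (σ n)) - h 0| + |h 0| := by
          simpa using abs_add_le (h (x (σ n)) - h 0) (h 0)
      _ ≤ K * |x (σ n) - 0| + |h 0| := by gcongr; exact h_lip (hx _) (by simp)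
      _ ≤ K + |h 0| := by
        rw [sub_zero]
        gcongr
        exact mul_le_of_le_one_right hK_nonneg (hx _)
  · have : 0 ≤ D := (abs_nonneg _).trans (hD 0)
    calc |h (x (σ n)) - h (y (σ n))| ≤ K * |x (σ n) - y (σ n)| := h_lip (hx _) (hy _)
      _ ≤ (K + |h 0|) * D := by
        gcongr
        exacts [le_add_of_nonneg_right (abs_nonneg _), hD _]
      _ = D * (K + |h 0|) := mul_comm _ _

theorem mul_left (hF : DominatedFrom N F b) (c : ℕ → ℝ) :
    DominatedFrom N (fun x n => c n * F x n) fun n => |c n| * b n where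
  abs_apply_le x hx n hn := by
    rw [abs_mul]
    exact mul_le_mul_of_nonneg_left (hF.abs_apply_le hx hn) (abs_nonneg _)
  abs_sub_apply_le x y D hx hy hD n hn := by
    rw [← mul_sub, abs_mul, mul_left_comm]
    exact mul_le_mul_of_nonneg_left (hF.abs_sub_apply_le hx hy hD hn) (abs_nonneg _)

theorem neg (hF : DominatedFrom N F b) : DominatedFrom N (fun x n => -F x n) b where
  abs_apply_le x hx n hn := (abs_neg (F x n)).trans_le (hF.abs_apply_le hx hn)
  abs_sub_apply_le x y D hx hy hD n hn := by
    rw [neg_sub_neg, abs_sub_comm]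
    exact hF.abs_sub_apply_le hx hy hD hn

theorem add (hF : DominatedFrom N F b) (hF' : DominatedFrom N F' b') :
    DominatedFrom N (fun x n => F x n + F' x n) fun n => b n + b' n where
  abs_apply_le x hx n hn := (abs_add_le _ _).trans
    (add_le_add (hF.abs_apply_le hx hn) (hF'.abs_apply_le hx hn))
  abs_sub_apply_le x y D hx hy hD n hn := by
    rw [add_sub_add_comm, mul_add]
    exact (abs_add_le _ _).trans
      (add_le_add (hF.abs_sub_apply_le hx hy hD hn) (hF'.abs_sub_apply_le hx hy hD hn))

theorem oddPow_comp (hF : DominatedFrom N F b) {s : ℕ → ℝ} (hs : ∀ n, 1 ≤ s n) :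
    DominatedFrom N (fun x n => oddPow (F x n) (s n)) fun n => s n * b n ^ s n where
  abs_apply_le x hx n hn := by
    have hs_pos : 0 < s n := one_pos.trans_le (hs n)
    have hb := hF.nonneg hn
    calc |oddPow (F x n) (s n)| = |F x n| ^ s n := abs_oddPow hs_pos.ne' _
      _ ≤ b n ^ s n := by gcongr; exact hF.abs_apply_le hx hn
      _ ≤ s n * b n ^ s n := le_mul_of_one_le_left (by positivity) (hs n)
  abs_sub_apply_le x y D hx hy hD n hn := by
    have hs_pos : 0 < s n := one_pos.trans_le (hs n)
    have hb := hF.nonneg hn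
    calc |oddPow (F x n) (s n) - oddPow (F y n) (s n)|
        ≤ s n * b n ^ (s n - 1) * |F x n - F y n| :=
          abs_oddPow_sub_oddPow_le (hs n) (hF.abs_apply_le hx hn) (hF.abs_apply_le hy hn)
      _ ≤ s n * b n ^ (s n - 1) * (D * b n) := by gcongr; exact hF.abs_sub_apply_le hx hy hD hn
      _ = D * (s n * (b n ^ (s n - 1) * b n)) := by ring
      _ = D * (s n * b n ^ s n) := by
        rw [← Real.rpow_add_one' hb (by simpa using hs_pos.ne'), sub_add_cancel]

theorem summable_tail (hF : DominatedFrom N F b) (hb : Summable b) {x : ℕ → ℝ}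
    (hx : ∀ n, |x n| ≤ 1) {n : ℕ} (hn : N ≤ n) : Summable fun i => F x (n + i) :=
  summable_tail_of_abs_le hb fun _ hi => hF.abs_apply_le hx (hn.trans hi)

theorem tailSum_comp (hF : DominatedFrom N F b) (hb : Summable b) :
    DominatedFrom N (fun x => tailSum (F x)) (tailSum b) where
  abs_apply_le _ hx _ hn := abs_tailSum_le hb fun _ hi => hF.abs_apply_le hx (hn.trans hi)
  abs_sub_apply_le x y D hx hy hD n hn := by
    calc |tailSum (F x) n - tailSum (F y) n|
        = |tailSum (fun i => F x i - F y i) n| := by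
          rw [tailSum, tailSum, tailSum,
            (hF.summable_tail hb hx hn).tsum_sub (hF.summable_tail hb hy hn)]
      _ ≤ tailSum (fun i => D * b i) n :=
          abs_tailSum_le (hb.mul_left D) fun _ hi => hF.abs_sub_apply_le hx hy hD (hn.trans hi)
      _ = D * tailSum b n := tsum_mul_left

theorem truncate {c : ℝ} (hF : DominatedFrom N F fun _ => c) :
    DominatedFrom 0 (fun x n => if N ≤ n then F x n else 0) fun _ => c where
  abs_apply_le x hx n _ := by
    split_ifs with hn
    · exact hF.abs_apply_le hx hn
    · simpa using hF.nonneg le_rfl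
  abs_sub_apply_le x y D hx hy hD n _ := by
    have hD_nonneg : 0 ≤ D := (abs_nonneg _).trans (hD 0)
    split_ifs with hn
    · exact hF.abs_sub_apply_le hx hy hD hn
    · simpa using mul_nonneg hD_nonneg (hF.nonneg le_rfl)

theorem exists_eq_self {c : ℝ} (hF : DominatedFrom 0 F fun _ => c) (hc : c < 1) :
    ∃ x : ℕ → ℝ, (∀ n, |x n| ≤ 1) ∧ F x = x := by
  let I := Set.Icc (-1 : ℝ) 1
  let toFun (x : ℕ →ᵇ I) (n : ℕ) : ℝ := x n
  have toFun_le (x : ℕ →ᵇ I) (n : ℕ) : |toFun x n| ≤ 1 := abs_le.2 (x n).2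
  have F_toFun_le (x : ℕ →ᵇ I) (n : ℕ) : |F (toFun x) n| ≤ 1 :=
    (hF.abs_apply_le (toFun_le x) n.zero_le).trans hc.le
  let T (x : ℕ →ᵇ I) : ℕ →ᵇ I := .mkOfDiscrete
    (fun n => ⟨F (toFun x) n, abs_le.1 (F_toFun_le x n)⟩) (1 - -1)
    fun _ _ => Real.dist_le_of_mem_Icc (Subtype.prop _) (Subtype.prop _)
  have hT : ContractingWith ⟨c, hF.nonneg le_rfl⟩ T := by
    refine ⟨hc, .of_dist_le_mul fun x y => ?_⟩
    have bound_nonneg : 0 ≤ c * dist x y := mul_nonneg (hF.nonneg le_rfl) dist_nonneg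
    refine (BoundedContinuousFunction.dist_le bound_nonneg).2 fun n => ?_
    have lip := hF.abs_sub_apply_le (toFun_le x) (toFun_le y)
      (fun m => BoundedContinuousFunction.dist_coe_le_dist (f := x) (g := y) m) n.zero_le
    exact lip.trans_eq (mul_comm _ _)
  have : Nonempty (ℕ →ᵇ I) := ⟨.const ℕ ⟨0, by simp [I]⟩⟩
  refine ⟨toFun (hT.fixedPoint T), toFun_le _, funext fun n => ?_⟩
  exact congrArg (fun x : ℕ →ᵇ I => (x n : ℝ)) hT.fixedPoint_isFixedPt

end DominatedFrom

/-- The solution `Δzₙ` of `rₙ (Δzₙ)^{γₙ} = ∑_{i ≥ n} Gᵢ`. -/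
noncomputable def increment (r γ G : ℕ → ℝ) (n : ℕ) : ℝ :=
  oddPow ((r n)⁻¹ * tailSum G n) (γ n)⁻¹

theorem quasidifference_add_eq_zero {γ r G z : ℕ → ℝ} {N : ℕ} (hγ : ∀ n, 0 < γ n)
    (hr : ∀ n, r n ≠ 0) (hG : ∀ n, N ≤ n → Summable fun i => G (n + i))
    (hinc : ∀ n, N ≤ n → Summable fun i => increment r γ G (n + i))
    (hz : ∀ n, N ≤ n → z n = -tailSum (increment r γ G) n) {n : ℕ} (hn : N ≤ n) :
    r (n + 1) * oddPow (z (n + 2) - z (n + 1)) (γ (n + 1)) -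
      r n * oddPow (z (n + 1) - z n) (γ n) + G n = 0 := by
  have diff_eq {m : ℕ} (hm : N ≤ m) : z (m + 1) - z m = increment r γ G m := by
    rw [hz m hm, hz (m + 1) (by omega), tailSum_eq_add_tailSum_succ (hinc m hm)]
    ring
  have quasidiff_eq {m : ℕ} (hm : N ≤ m) :
      r m * oddPow (z (m + 1) - z m) (γ m) = tailSum G m := by
    rw [diff_eq hm, increment, oddPow_oddPow_inv (hγ m), mul_inv_cancel_left₀ (hr m)]
  rw [quasidiff_eq hn, quasidiff_eq (hn.trans n.le_succ), tailSum_eq_add_tailSum_succ (hG n hn)]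
  ring

section Existence

variable {γ r p b : ℕ → ℝ} {γplus : ℝ} {G : (ℕ → ℝ) → ℕ → ℝ}

theorem DominatedFrom.increment_comp {N : ℕ} (hG : DominatedFrom N G b) (hb : Summable b)
    (hγ : ∀ n, 0 < γ n) (hγub : ∀ n, γ n ≤ γplus) (hγ1 : γplus ≤ 1)
    (hsmall : ∀ n, N ≤ n → 2 * (|(r n)⁻¹| * tailSum b n) ≤ 1) :
    DominatedFrom N (fun x => increment r γ (G x))
      fun n => (2 * (|(r n)⁻¹| * tailSum b n)) ^ γplus⁻¹ := by
  have one_le_inv : 1 ≤ γplus⁻¹ := (one_le_inv₀ ((hγ 0).trans_le (hγub 0))).2 hγ1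
  have inv_le_inv (n : ℕ) : γplus⁻¹ ≤ (γ n)⁻¹ := inv_anti₀ (hγ n) (hγub n)
  have hU := (hG.tailSum_comp hb).mul_left fun n => (r n)⁻¹
  exact (hU.oddPow_comp fun n => one_le_inv.trans (inv_le_inv n)).mono fun n hn =>
    mul_rpow_le_two_mul_rpow one_le_inv (inv_le_inv n) (hU.nonneg hn) (hsmall n hn)

theorem exists_bounded_solution_of_dominatedFrom (hG : DominatedFrom 0 G b) (hb : Summable b)
    (hγ : ∀ n, 0 < γ n) (hγub : ∀ n, γ n ≤ γplus) (hγ1 : γplus ≤ 1) (hr : ∀ n, r n ≠ 0)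
    (hsum : Summable fun n => (|(r n)⁻¹| * tailSum b n) ^ γplus⁻¹)
    {c : ℝ} (hc : c < 1) (hp : ∀ᶠ n in atTop, |p n| ≤ c) (k : ℕ) :
    ∃ x : ℕ → ℝ, (∀ n, |x n| ≤ 1) ∧ ∃ N, k ≤ N ∧ ∀ n, N ≤ n →
      r (n + 1) * oddPow ((x (n + 2) + p (n + 2) * x (n + 2 - k)) -
          (x (n + 1) + p (n + 1) * x (n + 1 - k))) (γ (n + 1)) -
        r n * oddPow ((x (n + 1) + p (n + 1) * x (n + 1 - k)) -
          (x n + p n * x (n - k))) (γ n) + G x n = 0 := by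
  have inv_nonneg : 0 ≤ γplus⁻¹ := inv_nonneg.2 ((hγ 0).le.trans (hγub 0))
  set e : ℕ → ℝ := fun n => (2 * (|(r n)⁻¹| * tailSum b n)) ^ γplus⁻¹
  have he : Summable e := by
    have weight_nonneg (n : ℕ) : 0 ≤ |(r n)⁻¹| * tailSum b n :=
      ((hG.tailSum_comp hb).mul_left fun n => (r n)⁻¹).nonneg n.zero_le
    simpa only [e, Real.mul_rpow zero_le_two (weight_nonneg _)] using
      hsum.mul_left (2 ^ γplus⁻¹)
  obtain ⟨N, hN⟩ := eventually_atTop.1 <| hp.and <|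
    (eventually_le_one_of_tendsto_rpow_zero inv_nonneg he.tendsto_atTop_zero).and <|
    ((tendsto_tailSum_atTop_zero e).eventually_le_const (half_pos (sub_pos.2 hc))).and <|
    eventually_ge_atTop k
  have hG' := hG.mono_index (Nat.zero_le N)
  have hinc : DominatedFrom N (fun x => increment r γ (G x)) e :=
    hG'.increment_comp hb hγ hγub hγ1 fun n hn => (hN n hn).2.1
  have hT : DominatedFrom N
      (fun x n => -(p n * x (n - k) + tailSum (increment r γ (G x)) n)) fun _ => (1 + c) / 2 :=
    (((DominatedFrom.eval N (· - k)).mul_left p).add (hinc.tailSum_comp he)).neg.mono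
      fun n hn => by linarith [(hN n hn).1, (hN n hn).2.2.1]
  obtain ⟨x, hx, hfix⟩ := hT.truncate.exists_eq_self (by linarith)
  have hz (n : ℕ) (hn : N ≤ n) :
      x n + p n * x (n - k) = -tailSum (increment r γ (G x)) n := by
    have hfix_n := congrFun hfix n
    simp only [if_pos hn] at hfix_n
    linarith
  exact ⟨x, hx, N, (hN N le_rfl).2.2.2, fun n hn =>
    quasidifference_add_eq_zero (z := fun n => x n + p n * x (n - k)) hγ hr
      (fun _ => hG'.summable_tail hb hx) (fun _ => hinc.summable_tail he hx) hz hn⟩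

end Existence

theorem stmt11_general (γ : ℕ → ℝ) (γplus : ℝ) (k : ℕ) (p r a q : ℕ → ℝ) (f g : ℝ → ℝ)
    (hγpos : ∀ n, 0 < γ n) (hγub : ∀ n, γ n ≤ γplus) (hγ1 : γplus ≤ 1)
    (hf : LocallyLipschitz f) (hg : LocallyLipschitz g) (hr : ∀ n, r n ≠ 0)
    (ha1 : Summable fun n => (|1 / r n| * ∑' i, |a (n + i)|) ^ (1 / γplus))
    (hq1 : Summable fun n => (|1 / r n| * ∑' i, |q (n + i)|) ^ (1 / γplus))
    (ha2 : Summable fun n => |a n|) (hq2 : Summable fun n => |q n|)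
    (hpl : (-1 : EReal) < liminf (fun n => (p n : EReal)) atTop)
    (hpu : limsup (fun n => (p n : EReal)) atTop < 1) :
    ∃ x : ℕ → ℝ, (∃ d : ℝ, ∀ n, |x n| ≤ d) ∧
      ∃ N, k ≤ N ∧ ∀ n, N ≤ n →
        r (n + 1) * oddPow ((x (n + 2) + p (n + 2) * x (n + 2 - k)) -
            (x (n + 1) + p (n + 1) * x (n + 1 - k))) (γ (n + 1)) -
          r n * oddPow ((x (n + 1) + p (n + 1) * x (n + 1 - k)) -
            (x n + p n * x (n - k))) (γ n) +
          q n * g (x n) + a n * f (x (n + 1)) = 0 := by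
  simp only [one_div] at ha1 hq1
  obtain ⟨c, hc, hp⟩ := exists_lt_eventually_abs_le (M := 1) (by simpa using hpl)
    (by simpa using hpu)
  obtain ⟨A, hA⟩ := DominatedFrom.exists_comp_eval hg 0 fun n => n
  obtain ⟨B, hB⟩ := DominatedFrom.exists_comp_eval hf 0 fun n => n + 1
  have hsum : Summable fun n =>
      (|(r n)⁻¹| * tailSum (fun i => |q i| * A + |a i| * B) n) ^ γplus⁻¹ := by
    have one_le_inv : 1 ≤ γplus⁻¹ := (one_le_inv₀ ((hγpos 0).trans_le (hγub 0))).2 hγ1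
    have weight_nonneg (c : ℕ → ℝ) (n : ℕ) : 0 ≤ |(r n)⁻¹| * ∑' i, |c (n + i)| := by positivity
    convert summable_rpow_mul_add_mul one_le_inv (hA.nonneg le_rfl) (hB.nonneg le_rfl)
      (weight_nonneg q) (weight_nonneg a) hq1 ha1 using 3 with n
    rw [tailSum_mul_add_mul hq2 ha2, tailSum, tailSum]
    ring
  obtain ⟨x, hx, N, hkN, hsol⟩ := exists_bounded_solution_of_dominatedFrom
    ((hA.mul_left q).add (hB.mul_left a)) ((hq2.mul_right A).add (ha2.mul_right B))
    hγpos hγub hγ1 hr hsum hc hp k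
  exact ⟨x, ⟨1, hx⟩, N, hkN, fun n hn => by simpa only [add_assoc] using hsol n hn⟩

/-- Existence of bounded solutions: let `(γₙ)` be ratios of odd positive integers with
`γ⁺ = sup γₙ ≤ 1`, `α ≥ 1`, `k` a positive integer, `f` locally Lipschitz,
`rₙ ≠ 0`, `pₙ ≠ 0`, `∑ₙ (|1/rₙ| ∑_{i≥n}|aᵢ|)^(1/γ⁺) < ∞`,
`∑ₙ (|1/rₙ| ∑_{i≥n}|qᵢ|)^(1/γ⁺) < ∞`, `∑|aᵢ| < ∞`, `∑|qᵢ| < ∞`, and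
`−1 < liminf pₙ ≤ limsup pₙ < 1`. Then there is a bounded sequence `x` satisfying
`Δ(rₙ (Δ(xₙ + pₙ x_{n−k}))^{γₙ}) + qₙ xₙ^α + aₙ f(x_{n+1}) = 0`
for all sufficiently large `n` (in particular on a tail of `{k, k+1, …}`). -/
theorem stmt11 (γ : ℕ → ℝ) (γplus α : ℝ) (k : ℕ) (p r a q : ℕ → ℝ) (f : ℝ → ℝ)
    (hγodd : ∀ n, IsOddRatio (γ n))
    (hγsup : γplus = ⨆ n, γ n) (hγub : ∀ n, γ n ≤ γplus) (hγ1 : γplus ≤ 1)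
    (hα : 1 ≤ α) (hk : 0 < k)
    (hf : LocallyLipschitz f)
    (hr : ∀ n, r n ≠ 0) (hp0 : ∀ n, p n ≠ 0)
    (ha1 : Summable fun n => (|1 / r n| * ∑' i, |a (n + i)|) ^ (1 / γplus))
    (hq1 : Summable fun n => (|1 / r n| * ∑' i, |q (n + i)|) ^ (1 / γplus))
    (ha2 : Summable fun n => |a n|) (hq2 : Summable fun n => |q n|)
    (hpl : (-1 : EReal) < Filter.liminf (fun n => (p n : EReal)) Filter.atTop)
    (hplu : Filter.liminf (fun n => (p n : EReal)) Filter.atTop ≤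
      Filter.limsup (fun n => (p n : EReal)) Filter.atTop)
    (hpu : Filter.limsup (fun n => (p n : EReal)) Filter.atTop < 1) :
    ∃ x : ℕ → ℝ, (∃ d : ℝ, ∀ n, |x n| ≤ d) ∧
      ∃ N, k ≤ N ∧ ∀ n, N ≤ n →
        r (n + 1) * oddPow ((x (n + 2) + p (n + 2) * x (n + 2 - k)) -
            (x (n + 1) + p (n + 1) * x (n + 1 - k))) (γ (n + 1)) -
          r n * oddPow ((x (n + 1) + p (n + 1) * x (n + 1 - k)) -
            (x n + p n * x (n - k))) (γ n) +
          q n * oddPow (x n) α + a n * f (x (n + 1)) = 0 := by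
  exact stmt11_general γ γplus k p r a q f (oddPow · α) (fun n => (hγodd n).pos) hγub hγ1 hf
    (locallyLipschitz_oddPow hα) hr ha1 hq1 ha2 hq2 hpl hpu
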